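/- Let α ≥ 0 and let x₀ > 0 satisfy α ≤ g(x₀), where g(x) = (1 + x)·ln(1 + 1/x)/√(2x + 1). Let (Ω, μ) be a probability space and let X : Ω → ℝ be an integrable random variable with 0 < X(ω) ≤ x₀ for almost every ω. Then E[f_α(X)] ≥ f_α(E[X]), where f_α(x) = ln(1 + 1/x) − α·√(2x + 1)/(1 + x). In particular, taking X = 1/γ for a random SINR γ, the ergodic finite-blocklength rate E[f_α(1/γ)] is lower bounded by f_α(1/E[1/γ]). -/

import Mathlib

open MeasureTheory

/-- The threshold function `g(x) = (1 + x) · ln(1 + 1/x) / √(2x + 1)` for `x > 0`. -/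
noncomputable def g (x : ℝ) : ℝ := (1 + x) * Real.log (1 + 1 / x) / Real.sqrt (2 * x + 1)

/-- The finite-blocklength rate as a function of the inverse SINR:
`f_α(x) = ln(1 + 1/x) − α·√(2x + 1)/(1 + x)`. -/
noncomputable def fα (α x : ℝ) : ℝ :=
  Real.log (1 + 1 / x) - α * Real.sqrt (2 * x + 1) / (1 + x)

lemma fα_hasDerivAt (α x : ℝ) (hx : 0 < x) :
    HasDerivAt (fα α) (-(1 / (x * (1 + x))) + α * x / (Real.sqrt (2 * x + 1) * (1 + x) ^ 2)) x := by
  have hs : 0 < 2 * x + 1 := by positivity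
  have hs' : 0 < Real.sqrt (2 * x + 1) := Real.sqrt_pos.mpr hs
  have h1 : HasDerivAt (fun y : ℝ => 1 + 1 / y) (-(x ^ 2)⁻¹) x := by
    simpa using (hasDerivAt_inv hx.ne').const_add 1
  have h2 := h1.log (by positivity)
  have h3 : HasDerivAt (fun y : ℝ => 2 * y + 1) 2 x := by
    simpa using ((hasDerivAt_id x).const_mul 2).add_const 1
  have h4 := (h3.sqrt hs.ne').const_mul α
  have h5 : HasDerivAt (fun y : ℝ => 1 + y) 1 x := (hasDerivAt_id x).const_add 1
  have h6 := h2.sub (h4.div h5 (by positivity))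
  refine h6.congr_deriv ?_
  have hsq : Real.sqrt (2 * x + 1) ^ 2 = 2 * x + 1 := Real.sq_sqrt hs.le
  generalize Real.sqrt (2 * x + 1) = s at *
  have e1 : -(x ^ 2)⁻¹ / (1 + 1 / x) = -(1 / (x * (1 + x))) := by
    field_simp
    try ring
  have e2 : (α * (2 / (2 * s)) * (1 + x) - α * s * 1) / (1 + x) ^ 2
      = - (α * x / (s * (1 + x) ^ 2)) := by
    field_simp
    linear_combination (-α) * hsq
  rw [e1, e2]; ring

lemma fα_hasDerivAt2 (α x : ℝ) (hx : 0 < x) :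
    HasDerivAt (fun x => -(1 / (x * (1 + x))) + α * x / (Real.sqrt (2 * x + 1) * (1 + x) ^ 2))
      ((2 * x + 1) / (x ^ 2 * (1 + x) ^ 2)
        + α * (1 - 3 * x ^ 2) / (Real.sqrt (2 * x + 1) ^ 3 * (1 + x) ^ 3)) x := by
  have hs : 0 < 2 * x + 1 := by positivity
  have hs' : 0 < Real.sqrt (2 * x + 1) := Real.sqrt_pos.mpr hs
  have h3 : HasDerivAt (fun y : ℝ => 2 * y + 1) 2 x := by
    simpa using ((hasDerivAt_id x).const_mul 2).add_const 1
  have h5 : HasDerivAt (fun y : ℝ => 1 + y) 1 x := (hasDerivAt_id x).const_add 1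
  have h6 : HasDerivAt (fun y : ℝ => y) 1 x := hasDerivAt_id x
  have h7 := ((hasDerivAt_const x (1 : ℝ)).div (h6.mul h5) (by simp; constructor <;> positivity)).neg
  have h8 := (h6.const_mul α).div ((h3.sqrt hs.ne').mul (h5.pow 2)) (by simp; constructor <;> positivity)
  refine (h7.add h8).congr_deriv ?_
  simp only [Pi.mul_apply, Pi.pow_apply]
  have hsq : Real.sqrt (2 * x + 1) ^ 2 = 2 * x + 1 := Real.sq_sqrt hs.le
  generalize Real.sqrt (2 * x + 1) = s at *
  congr 1
  · field_simp
    ring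
  · field_simp
    push_cast
    norm_num
    linear_combination α * (1 - x) * (1 + x) * hsq

lemma fα_second_nonneg (α x₀ x : ℝ) (hα : 0 ≤ α) (hg : α ≤ g x₀) (hx : 0 < x) (hxx : x ≤ x₀) :
    0 ≤ (2 * x + 1) / (x ^ 2 * (1 + x) ^ 2)
        + α * (1 - 3 * x ^ 2) / (Real.sqrt (2 * x + 1) ^ 3 * (1 + x) ^ 3) := by
  have hx₀ : 0 < x₀ := hx.trans_le hxx
  have hs : 0 < 2 * x + 1 := by positivity
  have hs' : 0 < Real.sqrt (2 * x + 1) := Real.sqrt_pos.mpr hs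
  have hb : α ≤ (1 + 1 / x) / Real.sqrt (2 * x + 1) := by
    have hl : Real.log (1 + 1 / x₀) ≤ 1 / x₀ := by
      have := Real.log_le_sub_one_of_pos (show 0 < 1 + 1 / x₀ by positivity)
      linarith
    calc α ≤ g x₀ := hg
      _ ≤ (1 + x₀) * (1 / x₀) / Real.sqrt (2 * x₀ + 1) := by
        unfold g; gcongr
      _ = (1 + 1 / x₀) / Real.sqrt (2 * x₀ + 1) := by
        congr 1; field_simp; try ring
      _ ≤ _ := by gcongr
  have hsq : Real.sqrt (2 * x + 1) ^ 2 = 2 * x + 1 := Real.sq_sqrt hs.le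
  generalize Real.sqrt (2 * x + 1) = s at *
  rcases le_total (3 * x ^ 2) 1 with h | h
  · have : 0 ≤ 1 - 3 * x ^ 2 := by linarith
    positivity
  · have h' : 0 ≤ 3 * x ^ 2 - 1 := by linarith
    have k1 : α * (3 * x ^ 2 - 1) / (s ^ 3 * (1 + x) ^ 3)
        ≤ (1 + 1 / x) / s * (3 * x ^ 2 - 1) / (s ^ 3 * (1 + x) ^ 3) := by gcongr
    have k2 : (1 + 1 / x) / s * (3 * x ^ 2 - 1) / (s ^ 3 * (1 + x) ^ 3)
        = (3 * x ^ 2 - 1) / (x * (2 * x + 1) ^ 2 * (1 + x) ^ 2) := by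
      rw [← hsq]; field_simp; try ring
    have k3 : (3 * x ^ 2 - 1) / (x * (2 * x + 1) ^ 2 * (1 + x) ^ 2)
        ≤ (2 * x + 1) / (x ^ 2 * (1 + x) ^ 2) := by
      rw [div_le_div_iff₀ (by positivity) (by positivity)]
      have : x * (3 * x ^ 2 - 1) ≤ (2 * x + 1) ^ 3 := by
        have : 0 < x ^ 3 := by positivity
        nlinarith [sq_nonneg x]
      have := mul_le_mul_of_nonneg_right this (show 0 ≤ x * (1 + x) ^ 2 by positivity)
      linarith
    have k4 : α * (1 - 3 * x ^ 2) / (s ^ 3 * (1 + x) ^ 3)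
      = - (α * (3 * x ^ 2 - 1) / (s ^ 3 * (1 + x) ^ 3)) := by ring
    linarith

lemma fα_convexOn (α x₀ : ℝ) (hα : 0 ≤ α) (hg : α ≤ g x₀) :
    ConvexOn ℝ (Set.Ioc 0 x₀) (fα α) := by
  refine convexOn_of_hasDerivWithinAt2_nonneg (convex_Ioc 0 x₀)
    (fun x hx => (fα_hasDerivAt α x hx.1).continuousAt.continuousWithinAt)
    (fun x hx => (fα_hasDerivAt α x (interior_subset hx).1).hasDerivWithinAt)
    (fun x hx => (fα_hasDerivAt2 α x (interior_subset hx).1).hasDerivWithinAt)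
    (fun x hx => fα_second_nonneg α x₀ x hα hg (interior_subset hx).1 (interior_subset hx).2)

lemma fα_tangent (α x₀ m : ℝ) (hα : 0 ≤ α) (hg : α ≤ g x₀) (hm : m ∈ Set.Ioc 0 x₀) :
    ∃ c : ℝ, ∀ x ∈ Set.Ioc 0 x₀, fα α m + c * (x - m) ≤ fα α x := by
  have hc := fα_convexOn α x₀ hα hg
  have hd := fα_hasDerivAt α m hm.1
  refine ⟨-(1 / (m * (1 + m))) + α * m / (Real.sqrt (2 * m + 1) * (1 + m) ^ 2), fun x hx => ?_⟩
  rcases lt_trichotomy x m with h | h | h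
  · have := hc.slope_le_of_hasDerivAt hx hm h hd
    rw [slope_def_field, div_le_iff₀ (by linarith)] at this
    linarith
  · subst h; simp
  · have := hc.le_slope_of_hasDerivAt hm hx h hd
    rw [slope_def_field, le_div_iff₀ (by linarith)] at this
    linarith

/-- Jensen's inequality for the ergodic finite-blocklength rate (inequality (16) of
the paper): if `α ≥ 0`, `x₀ > 0` with `α ≤ g(x₀)`, and `X` is an integrable random
variable on a probability space with `0 < X ≤ x₀` almost everywhere, then
`E[f_α(X)] ≥ f_α(E[X])`, where the expectation of the (a.e. nonnegative) random
variable `f_α(X)` is taken in the extended sense. -/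
theorem ergodic_rate_jensen (α x₀ : ℝ) (hα : 0 ≤ α) (hx₀ : 0 < x₀) (hg : α ≤ g x₀)
    {Ω : Type*} [MeasurableSpace Ω] (μ : Measure Ω) [IsProbabilityMeasure μ]
    (X : Ω → ℝ) (hX : Integrable X μ)
    (hbound : ∀ᵐ ω ∂μ, X ω ∈ Set.Ioc 0 x₀) :
    ENNReal.ofReal (fα α (∫ ω, X ω ∂μ)) ≤ ∫⁻ ω, ENNReal.ofReal (fα α (X ω)) ∂μ := by
  have hm0 : 0 < ∫ ω, X ω ∂μ := by
    rw [integral_pos_iff_support_of_nonneg_ae (hbound.mono fun ω h => h.1.le) hX]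
    have : Function.support X =ᵐ[μ] Set.univ := by
      filter_upwards [hbound] with ω h
      exact eq_true (show X ω ≠ 0 from h.1.ne')
    rw [measure_congr this]
    simp
  have hm1 : ∫ ω, X ω ∂μ ≤ x₀ := by
    have := integral_mono_ae hX (integrable_const x₀) (hbound.mono fun ω h => h.2)
    simpa using this
  obtain ⟨c, hc⟩ := fα_tangent α x₀ _ hα hg ⟨hm0, hm1⟩
  set m := ∫ ω, X ω ∂μ with hm
  have hi : Integrable (fun ω => fα α m + c * (X ω - m)) μ :=
    (integrable_const _).add ((hX.sub (integrable_const _)).const_mul c)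
  have he : ∫ ω, (fα α m + c * (X ω - m)) ∂μ = fα α m := by
    have hi2 : Integrable (fun ω => c * (X ω - m)) μ := (hX.sub (integrable_const _)).const_mul c
    rw [integral_add (integrable_const _) hi2,
      integral_const_mul, integral_sub hX (integrable_const _), ← hm]
    simp
  calc ENNReal.ofReal (fα α m) = ENNReal.ofReal (∫ ω, (fα α m + c * (X ω - m)) ∂μ) := by rw [he]
    _ ≤ ∫⁻ ω, ENNReal.ofReal (fα α m + c * (X ω - m)) ∂μ := by
      rw [integral_eq_lintegral_pos_part_sub_lintegral_neg_part hi]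
      refine ENNReal.ofReal_le_of_le_toReal ?_
      linarith [@ENNReal.toReal_nonneg (∫⁻ ω, ENNReal.ofReal (-(fα α m + c * (X ω - m))) ∂μ)]
    _ ≤ _ := lintegral_mono_ae (hbound.mono fun ω h => ENNReal.ofReal_le_ofReal (hc _ h))
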